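/- arXiv:2005.12098 — 3 statements merged into one kernel-verified Lean document; each statement's English description precedes it below -/
import Mathlib

section
/- Let (Ω, F, P) be a probability space, let Z be an integrable real random variable and let t ≥ 0. Then for every w ∈ ℝ there exists a unique z̄ ∈ ℝ such that E[h(t, Z − E[Z] + z̄)] = w; that is, the map z ↦ E[h(t, Z − E[Z] + z)] is a strictly increasing continuous bijection from ℝ onto ℝ. -/
open MeasureTheory Filter Set Function Topology

noncomputable section

/-- A function with values in a topological space is càdlàg on `[0,∞)`:
right-continuous at every `t ≥ 0` and admitting a left limit at every `t > 0`. -/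
def CadlagOn {E : Type*} [TopologicalSpace E] (f : ℝ → E) : Prop :=
  (∀ t : ℝ, 0 ≤ t → ContinuousWithinAt f (Set.Ici t) t) ∧
  ∀ t : ℝ, 0 < t → ∃ L : E, Filter.Tendsto f (nhdsWithin t (Set.Iio t)) (nhds L)

/-- Condition (H) on `h : [0,∞) × ℝ → ℝ` with constants `Mh, Lh, ch, Ch`. -/
structure CondH (h : ℝ → ℝ → ℝ) (Mh Lh ch Ch : ℝ) : Prop where
  meas : Measurable (Function.uncurry h)
  Mh_pos : 0 < Mh
  Lh_pos : 0 < Lh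
  ch_pos : 0 < ch
  Ch_pos : 0 < Ch
  growth : ∀ t x : ℝ, 0 ≤ t → |h t x| ≤ Mh * (1 + |x|)
  strict_mono : ∀ t : ℝ, 0 ≤ t → StrictMono (h t)
  lip_time : ∀ s t x : ℝ, 0 ≤ s → 0 ≤ t → |h t x - h s x| ≤ Lh * |t - s|
  lip_lower : ∀ t x y : ℝ, 0 ≤ t → ch * |x - y| ≤ |h t x - h t y|
  lip_upper : ∀ t x y : ℝ, 0 ≤ t → |h t x - h t y| ≤ Ch * |x - y|

/-- A process with càdlàg paths, integrable values, and values uniformly integrable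
on every compact time interval. -/
structure NiceProcess {Ω : Type*} [MeasurableSpace Ω] (μ : Measure Ω) (Y : ℝ → Ω → ℝ) : Prop where
  cadlag : ∀ ω, CadlagOn fun t => Y t ω
  integrable : ∀ t : ℝ, 0 ≤ t → Integrable (Y t) μ
  unifInt : ∀ q : ℝ, 0 ≤ q → UniformIntegrable (fun t : Set.Icc (0:ℝ) q => Y t.1) 1 μ

/-- Solution of the Skorokhod problem with mean minimality condition and two constraints
associated with `(h, Y, l, u)`. -/
def MeanSP {Ω : Type*} [MeasurableSpace Ω] (μ : Measure Ω) (h : ℝ → ℝ → ℝ)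
    (Y : ℝ → Ω → ℝ) (l u : ℝ → ℝ) (X : ℝ → Ω → ℝ) (k : ℝ → ℝ) : Prop :=
  (∀ ω, CadlagOn fun t => X t ω) ∧ CadlagOn k ∧ k 0 = 0 ∧
  (∀ t : ℝ, 0 ≤ t → ∀ ω, X t ω = Y t ω + k t) ∧
  (∀ t : ℝ, 0 ≤ t → (∫ ω, h t (X t ω) ∂μ) ∈ Set.Icc (l t) (u t)) ∧
  (∀ t q : ℝ, 0 ≤ t → t ≤ q →
    ((∀ s : ℝ, t < s → s ≤ q → (∫ ω, h s (X s ω) ∂μ) < u s) → 0 ≤ k q - k t) ∧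
    ((∀ s : ℝ, t < s → s ≤ q → l s < ∫ ω, h s (X s ω) ∂μ) → k q - k t ≤ 0)) ∧
  ∀ t : ℝ, 0 < t →
    ((∫ ω, h t (X t ω) ∂μ) < u t → 0 ≤ k t - Function.leftLim k t) ∧
    (l t < ∫ ω, h t (X t ω) ∂μ → k t - Function.leftLim k t ≤ 0)

/-- Solution of the deterministic Skorokhod problem with two time-dependent barriers. -/
def DetSP (y lb ub x k : ℝ → ℝ) : Prop :=
  CadlagOn x ∧ CadlagOn k ∧ k 0 = 0 ∧
  (∀ t : ℝ, 0 ≤ t → x t = y t + k t ∧ x t ∈ Set.Icc (lb t) (ub t)) ∧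
  (∀ t q : ℝ, 0 ≤ t → t ≤ q →
    ((∀ s : ℝ, t < s → s ≤ q → x s < ub s) → 0 ≤ k q - k t) ∧
    ((∀ s : ℝ, t < s → s ≤ q → lb s < x s) → k q - k t ≤ 0)) ∧
  ∀ t : ℝ, 0 < t →
    (x t < ub t → 0 ≤ k t - Function.leftLim k t) ∧
    (lb t < x t → k t - Function.leftLim k t ≤ 0)

/-- Solution of the Skorokhod problem with mean minimality condition and a single
lower barrier `l`.  The minimality condition `∫ (E[h(s,X_s)] - l_s) dk_s = 0` is expressed
through any measure `ν` that agrees with the Lebesgue–Stieltjes measure of `k` on `[0,∞)`. -/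
def MeanSPLower {Ω : Type*} [MeasurableSpace Ω] (μ : Measure Ω) (h : ℝ → ℝ → ℝ)
    (Y : ℝ → Ω → ℝ) (l : ℝ → ℝ) (X : ℝ → Ω → ℝ) (k : ℝ → ℝ) : Prop :=
  (∀ ω, CadlagOn fun t => X t ω) ∧ CadlagOn k ∧ k 0 = 0 ∧
  (∀ t : ℝ, 0 ≤ t → ∀ ω, X t ω = Y t ω + k t) ∧
  (∀ t : ℝ, 0 ≤ t → l t ≤ ∫ ω, h t (X t ω) ∂μ) ∧
  MonotoneOn k (Set.Ici 0) ∧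
  ∀ ν : Measure ℝ,
    (∀ a b : ℝ, 0 ≤ a → a ≤ b → ν (Set.Ioc a b) = ENNReal.ofReal (k b - k a)) →
    ν {0} = 0 →
    ∀ t : ℝ, 0 ≤ t → (∫ s in Set.Icc 0 t, ((∫ ω, h s (X s ω) ∂μ) - l s) ∂ν) = 0

/-- Solution of the Skorokhod problem with mean minimality condition and a single
upper barrier `u`.  The minimality condition `∫ (u_s - E[h(s,X_s)]) d(-k)_s = 0` is expressed
through any measure `ν` that agrees with the Lebesgue–Stieltjes measure of `-k` on `[0,∞)`. -/
def MeanSPUpper {Ω : Type*} [MeasurableSpace Ω] (μ : Measure Ω) (h : ℝ → ℝ → ℝ)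
    (Y : ℝ → Ω → ℝ) (u : ℝ → ℝ) (X : ℝ → Ω → ℝ) (k : ℝ → ℝ) : Prop :=
  (∀ ω, CadlagOn fun t => X t ω) ∧ CadlagOn k ∧ k 0 = 0 ∧
  (∀ t : ℝ, 0 ≤ t → ∀ ω, X t ω = Y t ω + k t) ∧
  (∀ t : ℝ, 0 ≤ t → (∫ ω, h t (X t ω) ∂μ) ≤ u t) ∧
  AntitoneOn k (Set.Ici 0) ∧
  ∀ ν : Measure ℝ,
    (∀ a b : ℝ, 0 ≤ a → a ≤ b → ν (Set.Ioc a b) = ENNReal.ofReal (k a - k b)) →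
    ν {0} = 0 →
    ∀ t : ℝ, 0 ≤ t → (∫ s in Set.Icc 0 t, (u s - ∫ ω, h s (X s ω) ∂μ) ∂ν) = 0

/-- `OscN x η q` is the number of `η`-oscillations of `x` on `[0,q]`: the largest `m`
for which there are `0 ≤ t₁ ≤ t₂ ≤ ⋯ ≤ t_{2m} ≤ q` with `|x(t_{2i}) - x(t_{2i-1})| > η`. -/
def OscN (x : ℝ → ℝ) (η q : ℝ) : ℕ :=
  sSup {m : ℕ | ∃ a b : Fin m → ℝ,
    (∀ i, 0 ≤ a i ∧ a i ≤ b i ∧ b i ≤ q) ∧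
    (∀ i j, i < j → b i ≤ a j) ∧
    ∀ i, η < |x (b i) - x (a i)|}

/-- The left limit at `t` of a càdlàg function on `[0,∞)`, with the convention
`x(0-) = x(0)`. -/
def leftLimAt {E : Type*} [TopologicalSpace E] (x : ℝ → E) (t : ℝ) : E :=
  if t = 0 then x 0 else Function.leftLim x t

/-- Convergence `xₙ → x` in the Skorokhod `J₁` topology on `D([0,∞), E)`, expressed via
the sequence characterization used in the paper. -/
def DConvOn {E : Type*} [TopologicalSpace E] (xs : ℕ → ℝ → E) (x : ℝ → E) : Prop :=
  ∀ t : ℝ, 0 ≤ t → ∃ tn : ℕ → ℝ,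
    (∀ n, 0 ≤ tn n) ∧ Filter.Tendsto tn Filter.atTop (nhds t) ∧
    ∀ t' t'' : ℕ → ℝ, (∀ n, 0 ≤ t' n) → (∀ n, 0 ≤ t'' n) →
      Filter.Tendsto t' Filter.atTop (nhds t) → Filter.Tendsto t'' Filter.atTop (nhds t) →
      (∀ n, t' n < tn n ∧ tn n ≤ t'' n) →
      Filter.Tendsto (fun n => xs n (t' n)) Filter.atTop (nhds (leftLimAt x t)) ∧
      Filter.Tendsto (fun n => xs n (t'' n)) Filter.atTop (nhds (x t))

/-!
If almost every path of a random function `Φ` is an increasing bijection of `ℝ`, so is its mean.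
Strict monotonicity integrates. By monotonicity, near `z` the values of `Φ` are squeezed between the
integrable variables `Φ (z - 1)` and `Φ (z + 1)`, so dominated convergence gives continuity of the
mean. Monotone convergence makes the mean unbounded in both directions, and the intermediate value
theorem concludes. Under condition (H) this applies to `Φ z ω = h t (Z ω - E Z + z)`.
-/

section IntegralOfMonotone

variable {Ω : Type*} [MeasurableSpace Ω] {μ : Measure Ω}

theorem strictMono_integral_of_ae_strictMono [NeZero μ] {ι : Type*} [Preorder ι] {f : ι → Ω → ℝ}
    (hint : ∀ i, Integrable (f i) μ) (hmono : ∀ᵐ ω ∂μ, StrictMono fun i => f i ω) :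
    StrictMono fun i => ∫ ω, f i ω ∂μ := by
  intro a b hab
  have hlt : ∀ᵐ ω ∂μ, f a ω < f b ω := hmono.mono fun ω hω => hω hab
  have hle : f a ≤ᵐ[μ] f b := hlt.mono fun ω hω => hω.le
  refine (integral_mono_ae (hint a) (hint b) hle).lt_of_ne fun heq => ?_
  have hae : f a =ᵐ[μ] f b := (integral_eq_iff_of_ae_le (hint a) (hint b) hle).mp heq
  obtain ⟨ω, hω_lt, hω_eq⟩ := (hlt.and hae).exists
  exact hω_lt.ne hω_eq

theorem continuous_integral_of_ae_monotone {ι : Type*} [LinearOrder ι] [TopologicalSpace ι]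
    [OrderTopology ι] [NoMinOrder ι] [NoMaxOrder ι] [FirstCountableTopology ι] {f : ι → Ω → ℝ}
    (hint : ∀ i, Integrable (f i) μ) (hmono : ∀ᵐ ω ∂μ, Monotone fun i => f i ω)
    (hcont : ∀ᵐ ω ∂μ, Continuous fun i => f i ω) :
    Continuous fun i => ∫ ω, f i ω ∂μ := by
  refine continuous_iff_continuousAt.mpr fun i => ?_
  obtain ⟨a, hai⟩ := exists_lt i
  obtain ⟨b, hib⟩ := exists_gt i
  refine continuousAt_of_dominated (bound := fun ω => max |f a ω| |f b ω|)
    (.of_forall fun j => (hint j).aestronglyMeasurable) ?_ ((hint a).abs.sup (hint b).abs)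
    (hcont.mono fun ω hω => hω.continuousAt)
  filter_upwards [Icc_mem_nhds hai hib] with j hj
  filter_upwards [hmono] with ω hω
  exact abs_le_max_abs_abs (hω hj.1) (hω hj.2)

theorem tendsto_integral_atTop_of_ae_monotone [NeZero μ] {f : ℕ → Ω → ℝ}
    (hint : ∀ n, Integrable (f n) μ) (hmono : ∀ᵐ ω ∂μ, Monotone fun n => f n ω)
    (htop : ∀ᵐ ω ∂μ, Tendsto (fun n => f n ω) atTop atTop) :
    Tendsto (fun n => ∫ ω, f n ω ∂μ) atTop atTop := by
  have hincr_int (n : ℕ) : Integrable (fun ω => f n ω - f 0 ω) μ := (hint n).sub (hint 0)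
  have hlintegral : Tendsto (fun n => ∫⁻ ω, ENNReal.ofReal (f n ω - f 0 ω) ∂μ) atTop
      (𝓝 (∫⁻ _, ⊤ ∂μ)) := by
    refine lintegral_tendsto_of_tendsto_of_monotone
      (fun n => (hincr_int n).aemeasurable.ennreal_ofReal) ?_ ?_
    · filter_upwards [hmono] with ω hω m n hmn
      exact ENNReal.ofReal_le_ofReal (sub_le_sub_right (hω hmn) _)
    · filter_upwards [htop] with ω hω
      exact ENNReal.tendsto_ofReal_nhds_top.mpr (tendsto_atTop_add_const_right _ _ hω)
  have hincr_eq (n : ℕ) : ∫⁻ ω, ENNReal.ofReal (f n ω - f 0 ω) ∂μ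
      = ENNReal.ofReal (∫ ω, f n ω ∂μ - ∫ ω, f 0 ω ∂μ) := by
    rw [← integral_sub (hint n) (hint 0), ofReal_integral_eq_lintegral_ofReal (hincr_int n)]
    filter_upwards [hmono] with ω hω
    exact sub_nonneg.mpr (hω n.zero_le)
  have hmass : ∫⁻ _, ⊤ ∂μ = ⊤ := by
    rw [lintegral_const, ENNReal.top_mul (NeZero.ne _)]
  simp only [hincr_eq, hmass] at hlintegral
  have hincr := ENNReal.tendsto_ofReal_nhds_top.mp hlintegral
  simpa only [sub_add_cancel] using tendsto_atTop_add_const_right _ (∫ ω, f 0 ω ∂μ) hincr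

theorem tendsto_integral_atBot_of_ae_antitone [NeZero μ] {f : ℕ → Ω → ℝ}
    (hint : ∀ n, Integrable (f n) μ) (hanti : ∀ᵐ ω ∂μ, Antitone fun n => f n ω)
    (hbot : ∀ᵐ ω ∂μ, Tendsto (fun n => f n ω) atTop atBot) :
    Tendsto (fun n => ∫ ω, f n ω ∂μ) atTop atBot := by
  refine tendsto_neg_atTop_iff.mp ?_
  simp only [← integral_neg]
  exact tendsto_integral_atTop_of_ae_monotone (fun n => (hint n).neg)
    (hanti.mono fun ω hω => hω.neg) (hbot.mono fun ω hω => tendsto_neg_atTop_iff.mpr hω)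

theorem surjective_integral_of_ae_monotone_of_ae_surjective [NeZero μ] {f : ℝ → Ω → ℝ}
    (hint : ∀ z, Integrable (f z) μ) (hmono : ∀ᵐ ω ∂μ, Monotone fun z => f z ω)
    (hsurj : ∀ᵐ ω ∂μ, Surjective fun z => f z ω) :
    Surjective fun z => ∫ ω, f z ω ∂μ := by
  have hcont : Continuous fun z => ∫ ω, f z ω ∂μ :=
    continuous_integral_of_ae_monotone hint hmono <| by
      filter_upwards [hmono, hsurj] with ω hω hω'
      exact hω.continuous_of_surjective hω'
  have htop : Tendsto (fun n : ℕ => ∫ ω, f n ω ∂μ) atTop atTop := by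
    refine tendsto_integral_atTop_of_ae_monotone (fun n => hint n)
      (hmono.mono fun ω hω => hω.comp Nat.mono_cast) ?_
    filter_upwards [hmono, hsurj] with ω hω hω'
    have hω_top := tendsto_atTop_atTop_of_monotone hω fun w => (hω' w).imp fun _ => Eq.ge
    exact hω_top.comp tendsto_natCast_atTop_atTop
  have hbot : Tendsto (fun n : ℕ => ∫ ω, f (-n) ω ∂μ) atTop atBot := by
    refine tendsto_integral_atBot_of_ae_antitone (fun n => hint (-n))
      (hmono.mono fun ω hω => hω.comp_antitone Nat.mono_cast.neg) ?_
    filter_upwards [hmono, hsurj] with ω hω hω'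
    have hω_bot := tendsto_atBot_atBot_of_monotone hω fun w => (hω' w).imp fun _ => Eq.le
    exact hω_bot.comp (tendsto_neg_atTop_atBot.comp tendsto_natCast_atTop_atTop)
  intro w
  obtain ⟨m, hm⟩ := (hbot.eventually_le_atBot w).exists
  obtain ⟨n, hn⟩ := (htop.eventually_ge_atTop w).exists
  exact mem_range_of_exists_le_of_exists_ge hcont ⟨-m, hm⟩ ⟨n, hn⟩

end IntegralOfMonotone

theorem surjective_of_continuous_of_mul_sub_le {f : ℝ → ℝ} {c : ℝ} (hf : Continuous f)
    (hc : 0 < c) (hexp : ∀ x y, x ≤ y → c * (y - x) ≤ f y - f x) : Surjective f := by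
  refine hf.surjective ?_ ?_
  · refine tendsto_atTop_mono' _ ?_
      (tendsto_atTop_add_const_right _ (f 0) (tendsto_id.const_mul_atTop hc))
    filter_upwards [eventually_ge_atTop 0] with x hx
    simp only [id]
    linarith [hexp 0 x hx]
  · refine tendsto_atBot_mono' _ ?_
      (tendsto_atBot_add_const_right _ (f 0) (tendsto_id.const_mul_atBot hc))
    filter_upwards [eventually_le_atBot 0] with x hx
    simp only [id]
    linarith [hexp x 0 hx]

namespace CondH

variable {h : ℝ → ℝ → ℝ} {Mh Lh ch Ch t : ℝ}

theorem continuous_right (hH : CondH h Mh Lh ch Ch) (ht : 0 ≤ t) : Continuous (h t) :=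
  (LipschitzWith.of_dist_le' fun x y => hH.lip_upper t x y ht).continuous

theorem surjective_right (hH : CondH h Mh Lh ch Ch) (ht : 0 ≤ t) : Surjective (h t) := by
  refine surjective_of_continuous_of_mul_sub_le (hH.continuous_right ht) hH.ch_pos
    fun x y hxy => ?_
  have hmono : h t x ≤ h t y := (hH.strict_mono t ht).monotone hxy
  simpa only [abs_of_nonneg (sub_nonneg.mpr hxy), abs_of_nonneg (sub_nonneg.mpr hmono)]
    using hH.lip_lower t y x ht

theorem integrable_comp {Ω : Type*} [MeasurableSpace Ω] {μ : Measure Ω} [IsFiniteMeasure μ]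
    (hH : CondH h Mh Lh ch Ch) (ht : 0 ≤ t) {X : Ω → ℝ} (hX : Integrable X μ) :
    Integrable (fun ω => h t (X ω)) μ :=
  (((integrable_const (1 : ℝ)).add hX.abs).const_mul Mh).mono'
    ((hH.continuous_right ht).comp_aestronglyMeasurable hX.aestronglyMeasurable)
    (.of_forall fun ω => hH.growth t (X ω) ht)

end CondH

theorem stmt_1_general {Ω : Type*} [MeasurableSpace Ω] {μ : Measure Ω} [NeZero μ]
    {Φ : ℝ → Ω → ℝ} (hint : ∀ z, Integrable (Φ z) μ)
    (hmono : ∀ᵐ ω ∂μ, StrictMono fun z => Φ z ω) (hsurj : ∀ᵐ ω ∂μ, Surjective fun z => Φ z ω) :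
    (∀ w : ℝ, ∃! z : ℝ, ∫ ω, Φ z ω ∂μ = w) ∧
    StrictMono (fun z => ∫ ω, Φ z ω ∂μ) ∧
    Continuous (fun z => ∫ ω, Φ z ω ∂μ) ∧
    Bijective (fun z => ∫ ω, Φ z ω ∂μ) := by
  have hmean_mono := strictMono_integral_of_ae_strictMono hint hmono
  have hmean_surj := surjective_integral_of_ae_monotone_of_ae_surjective hint
    (hmono.mono fun ω hω => hω.monotone) hsurj
  have hmean_bij : Bijective fun z => ∫ ω, Φ z ω ∂μ := ⟨hmean_mono.injective, hmean_surj⟩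
  exact ⟨hmean_bij.existsUnique, hmean_mono,
    hmean_mono.monotone.continuous_of_surjective hmean_surj, hmean_bij⟩

/-- `z ↦ E[h(t, Z - E Z + z)]` is a strictly increasing continuous bijection
of `ℝ` onto `ℝ`; in particular every value `w` is attained at a unique point. -/
theorem stmt_1 {Ω : Type*} [MeasurableSpace Ω] (μ : Measure Ω) [IsProbabilityMeasure μ]
    (h : ℝ → ℝ → ℝ) (Mh Lh ch Ch : ℝ) (hH : CondH h Mh Lh ch Ch)
    (Z : Ω → ℝ) (hZ : Integrable Z μ) (t : ℝ) (ht : 0 ≤ t) :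
    (∀ w : ℝ, ∃! z : ℝ, (∫ ω, h t (Z ω - (∫ ω', Z ω' ∂μ) + z) ∂μ) = w) ∧
    StrictMono (fun z : ℝ => ∫ ω, h t (Z ω - (∫ ω', Z ω' ∂μ) + z) ∂μ) ∧
    Continuous (fun z : ℝ => ∫ ω, h t (Z ω - (∫ ω', Z ω' ∂μ) + z) ∂μ) ∧
    Function.Bijective (fun z : ℝ => ∫ ω, h t (Z ω - (∫ ω', Z ω' ∂μ) + z) ∂μ) :=
  stmt_1_general
    (fun z => hH.integrable_comp ht ((hZ.sub (integrable_const _)).add (integrable_const z)))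
    (.of_forall fun _ => (hH.strict_mono t ht).comp add_right_strictMono)
    (.of_forall fun _ => (hH.surjective_right ht).comp (add_left_surjective _))
end
end

section
/- If z̄ : [0,∞) → ℝ is a càdlàg function, then the function t ↦ z_t := E[h(t, Y_t − E[Y_t] + z̄_t)] is càdlàg on [0,∞). -/
open MeasureTheory Filter Set Function Topology

noncomputable section

/-!
Vitali's theorem makes the mean of a uniformly integrable càdlàg process càdlàg. The class of such
processes is stable under subtracting a deterministic càdlàg function, which is bounded on compact
intervals, and under composition with a jointly continuous function of linear growth. Applied
to `Y`, this shows first that `t ↦ E Y_t` is càdlàg, then that `Y_t - (E Y_t - z̄_t)` and its image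
under `h` belong to the class, so that the mean of the latter is càdlàg.
-/

section UniformIntegrability

variable {ι α E F : Type*} [MeasurableSpace α] {μ : Measure α} [NormedAddCommGroup E]
  [NormedAddCommGroup F]

lemma uniformIntegrable_comp_index {κ : Type*} {p : ENNReal} {f : ι → α → E}
    (hf : UniformIntegrable f p μ) (u : κ → ι) : UniformIntegrable (fun k => f (u k)) p μ := by
  obtain ⟨hmeas, hunif, C, hC⟩ := hf
  refine ⟨fun k => hmeas (u k), fun ε hε => ?_, C, fun k => hC (u k)⟩
  obtain ⟨δ, hδ, hsmall⟩ := hunif hε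
  exact ⟨δ, hδ, fun k => hsmall (u k)⟩

lemma uniformIntegrable_add {p : ENNReal} (hp : 1 ≤ p) {f g : ι → α → E}
    (hf : UniformIntegrable f p μ) (hg : UniformIntegrable g p μ) :
    UniformIntegrable (f + g) p μ := by
  obtain ⟨hf_meas, hf_unif, C, hC⟩ := hf
  obtain ⟨hg_meas, hg_unif, D, hD⟩ := hg
  refine ⟨fun i => (hf_meas i).add (hg_meas i), hf_unif.add hg_unif hp hf_meas hg_meas,
    C + D, fun i => ?_⟩
  calc eLpNorm (f i + g i) p μ
      ≤ eLpNorm (f i) p μ + eLpNorm (g i) p μ := eLpNorm_add_le (hf_meas i) (hg_meas i) hp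
    _ ≤ C + D := add_le_add (hC i) (hD i)

lemma uniformIntegrable_of_norm_le_mul {p : ENNReal} {f : ι → α → E} {g : ι → α → F} {K : ℝ}
    (hf : UniformIntegrable f p μ) (hg : ∀ i, AEStronglyMeasurable (g i) μ)
    (hgf : ∀ i, ∀ᵐ ω ∂μ, ‖g i ω‖ ≤ K * ‖f i ω‖) : UniformIntegrable g p μ := by
  obtain ⟨-, hunif, C, hC⟩ := hf
  refine ⟨hg, fun ε hε => ?_, K.toNNReal * C, fun i => ?_⟩
  · obtain ⟨δ, hδ, hsmall⟩ := hunif (ε := ε / max K 1) (by positivity)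
    refine ⟨δ, hδ, fun i s hs hμs => ?_⟩
    have hle : ∀ᵐ ω ∂μ, ‖s.indicator (g i) ω‖ ≤ K * ‖s.indicator (f i) ω‖ := by
      filter_upwards [hgf i] with ω hω
      by_cases hmem : ω ∈ s <;> simp [hmem, hω]
    calc eLpNorm (s.indicator (g i)) p μ
        ≤ ENNReal.ofReal K * eLpNorm (s.indicator (f i)) p μ :=
          eLpNorm_le_mul_eLpNorm_of_ae_le_mul hle p
      _ ≤ ENNReal.ofReal (max K 1) * ENNReal.ofReal (ε / max K 1) := by
          gcongr
          exacts [le_max_left K 1, hsmall i s hs hμs]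
      _ = ENNReal.ofReal ε := by
          rw [← ENNReal.ofReal_mul (by positivity), mul_div_cancel₀ ε (by positivity)]
  · calc eLpNorm (g i) p μ
        ≤ ENNReal.ofReal K * eLpNorm (f i) p μ := eLpNorm_le_mul_eLpNorm_of_ae_le_mul (hgf i) p
      _ ≤ (K.toNNReal * C : NNReal) := by
          rw [ENNReal.coe_mul]
          exact mul_le_mul_right (hC i) _

lemma uniformIntegrable_of_linear_growth [IsFiniteMeasure μ] {p : ENNReal} (hp : 1 ≤ p)
    (hp_top : p ≠ ⊤) {f : ι → α → E} {g : ι → α → F} {K : ℝ} (hf : UniformIntegrable f p μ)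
    (hg : ∀ i, AEStronglyMeasurable (g i) μ)
    (hgf : ∀ i, ∀ᵐ ω ∂μ, ‖g i ω‖ ≤ K * (1 + ‖f i ω‖)) : UniformIntegrable g p μ := by
  have hnorm : UniformIntegrable (fun i ω => ‖f i ω‖) p μ :=
    uniformIntegrable_of_norm_le_mul (K := 1) hf (fun i => (hf.1 i).norm) (by simp)
  have hmajorant := uniformIntegrable_add hp
    (uniformIntegrable_const (ι := ι) hp hp_top (memLp_const (1 : ℝ))) hnorm
  refine uniformIntegrable_of_norm_le_mul (K := K) hmajorant hg fun i => ?_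
  filter_upwards [hgf i] with ω hω
  rwa [Pi.add_apply, Pi.add_apply, Real.norm_of_nonneg (by positivity)]

lemma tendsto_integral_of_uniformIntegrable [NormedSpace ℝ E] [IsFiniteMeasure μ] {l : Filter ι}
    [l.IsCountablyGenerated] {f : ι → α → E} {g : α → E} (hf : UniformIntegrable f 1 μ)
    (hfg : ∀ᵐ ω ∂μ, Tendsto (fun i => f i ω) l (𝓝 (g ω))) :
    Tendsto (fun i => ∫ ω, f i ω ∂μ) l (𝓝 (∫ ω, g ω ∂μ)) := by
  refine tendsto_of_seq_tendsto fun u hu => ?_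
  have hfu := uniformIntegrable_comp_index hf u
  have hlim : ∀ᵐ ω ∂μ, Tendsto (fun n => f (u n) ω) atTop (𝓝 (g ω)) :=
    hfg.mono fun ω hω => hω.comp hu
  have hg : Integrable g μ := hfu.integrable_of_ae_tendsto hlim
  have hL1 := tendsto_Lp_finite_of_tendsto_ae le_rfl ENNReal.one_ne_top hfu.1
    (memLp_one_iff_integrable.2 hg) hfu.2.1 hlim
  exact tendsto_integral_of_L1' g hg.1
    (.of_forall fun n => memLp_one_iff_integrable.1 (hfu.memLp n)) hL1

end UniformIntegrability

namespace CadlagOn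

lemma sub {E : Type*} [TopologicalSpace E] [Sub E] [ContinuousSub E] {f g : ℝ → E}
    (hf : CadlagOn f) (hg : CadlagOn g) : CadlagOn fun t => f t - g t := by
  refine ⟨fun t ht => (hf.1 t ht).sub (hg.1 t ht), fun t ht => ?_⟩
  obtain ⟨L, hL⟩ := hf.2 t ht
  obtain ⟨M, hM⟩ := hg.2 t ht
  exact ⟨L - M, hL.sub hM⟩

lemma comp_continuousOn {E F : Type*} [TopologicalSpace E] [TopologicalSpace F] {f : ℝ → E}
    (hf : CadlagOn f) {h : ℝ → E → F} (hh : ContinuousOn (uncurry h) (Ici 0 ×ˢ univ)) :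
    CadlagOn fun t => h t (f t) := by
  have tendsto_comp {t : ℝ} {L : E} {l : Filter ℝ} (ht : 0 ≤ t) (hlt : l ≤ 𝓝 t) (hl : Ici 0 ∈ l)
      (hL : Tendsto f l (𝓝 L)) : Tendsto (fun s => h s (f s)) l (𝓝 (h t L)) := by
    have hpair : Tendsto (fun s => (s, f s)) l (𝓝[Ici 0 ×ˢ univ] (t, L)) :=
      tendsto_nhdsWithin_iff.2 ⟨(tendsto_id'.2 hlt).prodMk_nhds hL,
        mem_of_superset hl fun s hs => ⟨hs, mem_univ _⟩⟩
    exact (hh (t, L) ⟨ht, mem_univ L⟩).tendsto.comp hpair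
  refine ⟨fun t ht => ?_, fun t ht => ?_⟩
  · exact tendsto_comp ht nhdsWithin_le_nhds
      (mem_of_superset self_mem_nhdsWithin (Ici_subset_Ici.2 ht)) (hf.1 t ht)
  · obtain ⟨L, hL⟩ := hf.2 t ht
    exact ⟨h t L, tendsto_comp ht.le nhdsWithin_le_nhds
      (mem_nhdsWithin_of_mem_nhds (Ici_mem_nhds ht)) hL⟩

lemma isBounded_image_Icc {E : Type*} [PseudoMetricSpace E] {f : ℝ → E} (hf : CadlagOn f) (q : ℝ) :
    Bornology.IsBounded (f '' Icc 0 q) := by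
  refine isCompact_Icc.induction_on (p := fun s => Bornology.IsBounded (f '' s)) (by simp)
    (fun s t hst ht => ht.subset (image_mono hst))
    (fun s t hs ht => by simpa only [image_union] using hs.union ht) fun t ht => ?_
  obtain ⟨u, hu, hu_bdd⟩ := Metric.exists_isBounded_image_of_tendsto (hf.1 t ht.1)
  obtain rfl | ht_pos := ht.1.eq_or_lt
  · exact ⟨u, nhdsWithin_mono 0 Icc_subset_Ici_self hu, hu_bdd⟩
  · obtain ⟨L, hL⟩ := hf.2 t ht_pos
    obtain ⟨v, hv, hv_bdd⟩ := Metric.exists_isBounded_image_of_tendsto hL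
    refine ⟨v ∪ u, mem_nhdsWithin_of_mem_nhds ?_, ?_⟩
    · rw [← nhdsLT_sup_nhdsGE]
      exact union_mem_sup hv hu
    · simpa only [image_union] using hv_bdd.union hu_bdd

end CadlagOn

namespace NiceProcess

variable {Ω : Type*} [MeasurableSpace Ω] {μ : Measure Ω} [IsFiniteMeasure μ] {Y : ℝ → Ω → ℝ}

lemma cadlagOn_integral (hY : NiceProcess μ Y) : CadlagOn fun t => ∫ ω, Y t ω ∂μ := by
  have tendsto_integral {t : ℝ} {l : Filter ℝ} [l.IsCountablyGenerated] {Z : Ω → ℝ} (ht : 0 ≤ t)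
      (hl : Icc 0 (t + 1) ∈ l) (hZ : ∀ ω, Tendsto (fun s => Y s ω) l (𝓝 (Z ω))) :
      Tendsto (fun s => ∫ ω, Y s ω ∂μ) l (𝓝 (∫ ω, Z ω ∂μ)) := by
    rw [← tendsto_comap'_iff (i := ((↑) : Icc 0 (t + 1) → ℝ)) (by rwa [Subtype.range_coe])]
    exact tendsto_integral_of_uniformIntegrable (hY.unifInt (t + 1) (by linarith))
      (.of_forall fun ω => (hZ ω).comp tendsto_comap)
  refine ⟨fun t ht => tendsto_integral ht ?_ fun ω => (hY.cadlag ω).1 t ht, fun t ht => ?_⟩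
  · exact mem_of_superset (Icc_mem_nhdsGE (lt_add_one t)) (Icc_subset_Icc_left ht)
  · choose Z hZ using fun ω => (hY.cadlag ω).2 t ht
    exact ⟨∫ ω, Z ω ∂μ, tendsto_integral ht.le
      (mem_nhdsWithin_of_mem_nhds (Icc_mem_nhds ht (lt_add_one t))) hZ⟩

lemma sub_deterministic (hY : NiceProcess μ Y) {c : ℝ → ℝ} (hc : CadlagOn c) :
    NiceProcess μ fun t ω => Y t ω - c t where
  cadlag ω := (hY.cadlag ω).sub hc
  integrable t ht := (hY.integrable t ht).sub (integrable_const _)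
  unifInt q hq := by
    obtain ⟨C, hC⟩ := (hc.isBounded_image_Icc q).exists_norm_le
    refine uniformIntegrable_of_linear_growth (K := max C 1) le_rfl ENNReal.one_ne_top
      (hY.unifInt q hq) (fun t => ((hY.integrable t t.2.1).sub (integrable_const _)).1)
      fun t => .of_forall fun ω => ?_
    have hct : ‖c t‖ ≤ C := hC _ (mem_image_of_mem c t.2)
    calc ‖Y t ω - c t‖
        ≤ ‖Y t ω‖ + ‖c t‖ := norm_sub_le _ _
      _ ≤ max C 1 * ‖Y t ω‖ + max C 1 :=
          add_le_add (le_mul_of_one_le_left (norm_nonneg _) (le_max_right C 1))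
            (hct.trans (le_max_left C 1))
      _ = max C 1 * (1 + ‖Y t ω‖) := by ring

lemma comp_continuousOn (hY : NiceProcess μ Y) {h : ℝ → ℝ → ℝ}
    (hcont : ContinuousOn (uncurry h) (Ici 0 ×ˢ univ))
    (hgrowth : ∀ q, ∃ M, ∀ t ∈ Icc 0 q, ∀ x, |h t x| ≤ M * (1 + |x|)) :
    NiceProcess μ fun t ω => h t (Y t ω) := by
  have hunif (q : ℝ) (hq : 0 ≤ q) :
      UniformIntegrable (fun (t : Icc 0 q) ω => h t (Y t ω)) 1 μ := by
    obtain ⟨M, hM⟩ := hgrowth q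
    refine uniformIntegrable_of_linear_growth le_rfl ENNReal.one_ne_top (hY.unifInt q hq)
      (fun t => ?_) fun t => .of_forall fun ω => hM t t.2 (Y t ω)
    have ht : Continuous (h t) :=
      hcont.comp_continuous (Continuous.prodMk_right (t : ℝ)) fun x => ⟨t.2.1, mem_univ x⟩
    exact ht.comp_aestronglyMeasurable (hY.integrable t t.2.1).1
  exact {
    cadlag := fun ω => (hY.cadlag ω).comp_continuousOn hcont
    integrable := fun t ht =>
      memLp_one_iff_integrable.1 ((hunif t ht).memLp ⟨t, right_mem_Icc.2 ht⟩)
    unifInt := hunif }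

end NiceProcess

lemma CondH.continuousOn_uncurry {h : ℝ → ℝ → ℝ} {Mh Lh ch Ch : ℝ} (hH : CondH h Mh Lh ch Ch) :
    ContinuousOn (uncurry h) (Ici 0 ×ˢ univ) := by
  refine continuousOn_prod_of_continuousOn_lipschitzOnWith _ ⟨Lh, hH.Lh_pos.le⟩
    (fun t ht => ?_) fun x _ => ?_
  · exact (LipschitzWith.of_dist_le_mul (K := ⟨Ch, hH.Ch_pos.le⟩)
      fun x y => hH.lip_upper t x y ht).continuous.continuousOn
  · exact LipschitzOnWith.of_dist_le_mul fun t ht s hs => hH.lip_time s t x hs ht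

theorem stmt_2_general {Ω : Type*} [MeasurableSpace Ω] (μ : Measure Ω) [IsFiniteMeasure μ]
    (h : ℝ → ℝ → ℝ) (hcont : ContinuousOn (uncurry h) (Ici 0 ×ˢ univ))
    (hgrowth : ∀ q, ∃ M, ∀ t ∈ Icc 0 q, ∀ x, |h t x| ≤ M * (1 + |x|))
    (Y : ℝ → Ω → ℝ) (hY : NiceProcess μ Y) (zb : ℝ → ℝ) (hzb : CadlagOn zb) :
    CadlagOn fun t => ∫ ω, h t (Y t ω - (∫ ω', Y t ω' ∂μ) + zb t) ∂μ := by
  have hX : NiceProcess μ fun t ω => Y t ω - ((∫ ω', Y t ω' ∂μ) - zb t) :=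
    hY.sub_deterministic (hY.cadlagOn_integral.sub hzb)
  simpa only [sub_sub_eq_add_sub, sub_add_eq_add_sub] using
    (hX.comp_continuousOn hcont hgrowth).cadlagOn_integral

/-- if `z̄` is càdlàg then `t ↦ E[h(t, Y_t - E Y_t + z̄_t)]` is càdlàg. -/
theorem stmt_2 {Ω : Type*} [MeasurableSpace Ω] (μ : Measure Ω) [IsProbabilityMeasure μ]
    (h : ℝ → ℝ → ℝ) (Mh Lh ch Ch : ℝ) (hH : CondH h Mh Lh ch Ch)
    (Y : ℝ → Ω → ℝ) (hY : NiceProcess μ Y)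
    (zb : ℝ → ℝ) (hzb : CadlagOn zb) :
    CadlagOn fun t => ∫ ω, h t (Y t ω - (∫ ω', Y t ω' ∂μ) + zb t) ∂μ :=
  stmt_2_general μ h hH.continuousOn_uncurry
    (fun _ => ⟨Mh, fun t ht x => hH.growth t x ht.1⟩) Y hY zb hzb
end
end

section
/- If (X, k) and (X', k') are both solutions of the Skorokhod problem with mean minimality condition and two constraints associated with (h, Y, l, u), then k_t = k'_t for all t ≥ 0 and X_t(ω) = X'_t(ω) for all t ≥ 0 and ω ∈ Ω. -/
open MeasureTheory Filter Set Function Topology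

noncomputable section

/-!
Let `k, k'` come from two solutions and put `d = k - k'`. As `h t` is strictly increasing, so is the
mean `c ↦ E[h(t, Y_t + c)]`; hence `l ≤ E[h(t, X'_t)] < E[h(t, X_t)] ≤ u` whenever `k' < k`.
There the minimality conditions forbid `k` to increase and `k'` to decrease, whether over an
interval or by a jump, so `d` cannot grow while it is positive. If `d q > 0`, let `t` be the
supremum of the times in `[0, q]` at which `d ≤ 0`. Then `0 < d q ≤ d t`, so `t > 0` and
`0 < d t ≤ d (t-)`, and `d` is positive just before `t` as well as at `t`, contradicting the choice
of `t`.
-/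

section Excursion

variable {α β : Type*} [ConditionallyCompleteLinearOrder α] [TopologicalSpace α] [OrderTopology α]
  [LinearOrder β]

theorem apply_le_of_forall_excursion_le {d : α → β} {a q : α} {c : β} (hda : d a ≤ c)
    (hdec : ∀ t, a ≤ t → t ≤ q → (∀ s ∈ Ioc t q, c < d s) → d q ≤ d t)
    (hleft : ∀ t, a < t → c < d t → ∀ᶠ s in 𝓝[<] t, c < d s) (haq : a ≤ q) :
    d q ≤ c := by
  by_contra! hdq
  set S : Set α := {s ∈ Icc a q | d s ≤ c}
  have haS : a ∈ S := ⟨left_mem_Icc.2 haq, hda⟩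
  have hlub : IsLUB S (sSup S) := isLUB_csSup ⟨a, haS⟩ ⟨q, fun s hs ↦ hs.1.2⟩
  have hat : a ≤ sSup S := hlub.1 haS
  have htq : sSup S ≤ q := hlub.2 fun s hs ↦ hs.1.2
  have hgt_after : ∀ s ∈ Ioc (sSup S) q, c < d s := by
    intro s hs
    by_contra! hds
    exact hs.1.not_ge (hlub.1 ⟨⟨hat.trans hs.1.le, hs.2⟩, hds⟩)
  have hgt_sup : c < d (sSup S) := hdq.trans_le (hdec _ hat htq hgt_after)
  have hat' : a < sSup S := hat.lt_of_ne fun h ↦ hgt_sup.not_ge (h ▸ hda)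
  have hgt_before : ∀ᶠ s in 𝓝[≤] sSup S, c < d s := by
    rw [← nhdsLT_sup_nhdsWithin_singleton, nhdsWithin_singleton]
    exact eventually_sup.2 ⟨hleft _ hat' hgt_sup, hgt_sup⟩
  obtain ⟨s, hsS, hs⟩ := ((hlub.frequently_mem ⟨a, haS⟩).and_eventually hgt_before).exists
  exact hs.not_ge hsS.2

end Excursion

theorem CadlagOn.tendsto_leftLim {E : Type*} [TopologicalSpace E] {f : ℝ → E} (hf : CadlagOn f)
    {t : ℝ} (ht : 0 < t) : Tendsto f (𝓝[<] t) (𝓝 (leftLim f t)) :=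
  tendsto_leftLim_of_tendsto (hf.2 t ht)

section Integral

variable {Ω : Type*} [MeasurableSpace Ω] {μ : Measure Ω}

theorem strictMono_integral [NeZero μ] {ι : Type*} [Preorder ι] {F : ι → Ω → ℝ}
    (hint : ∀ i, Integrable (F i) μ) (hF : ∀ ω, StrictMono fun i ↦ F i ω) :
    StrictMono fun i ↦ ∫ ω, F i ω ∂μ := by
  intro i j hij
  have hpos : ∀ ω, 0 < F j ω - F i ω := fun ω ↦ sub_pos.2 (hF ω hij)
  have hsupp : support (fun ω ↦ F j ω - F i ω) = univ := eq_univ_of_forall fun ω ↦ (hpos ω).ne'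
  have hdiff : 0 < ∫ ω, (F j ω - F i ω) ∂μ := by
    rw [integral_pos_iff_support_of_nonneg (fun ω ↦ (hpos ω).le) ((hint j).sub (hint i)), hsupp]
    exact NeZero.pos _
  rwa [integral_sub (hint j) (hint i), sub_pos] at hdiff

theorem integrable_comp_of_norm_le_linear [IsFiniteMeasure μ] {E F : Type*} [NormedAddCommGroup E]
    [MeasurableSpace E] [BorelSpace E] [NormedAddCommGroup F] {g : E → F} {M : ℝ}
    (hg : StronglyMeasurable g) (hgM : ∀ x, ‖g x‖ ≤ M * (1 + ‖x‖)) {Z : Ω → E}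
    (hZ : Integrable Z μ) : Integrable (fun ω ↦ g (Z ω)) μ :=
  (((integrable_const 1).add hZ.norm).const_mul M).mono'
    (hg.aestronglyMeasurable.comp_aemeasurable hZ.aemeasurable) (.of_forall fun ω ↦ hgM (Z ω))

theorem CondH.integrable_comp_s5 [IsFiniteMeasure μ] {h : ℝ → ℝ → ℝ} {Mh Lh ch Ch : ℝ}
    (hH : CondH h Mh Lh ch Ch) {t : ℝ} (ht : 0 ≤ t) {Z : Ω → ℝ} (hZ : Integrable Z μ) :
    Integrable (fun ω ↦ h t (Z ω)) μ :=
  integrable_comp_of_norm_le_linear hH.meas.of_uncurry_left.stronglyMeasurable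
    (fun x ↦ hH.growth t x ht) hZ

end Integral

namespace MeanSP

variable {Ω : Type*} [MeasurableSpace Ω] {μ : Measure Ω} {h : ℝ → ℝ → ℝ} {Y X X' : ℝ → Ω → ℝ}
  {l u k k' : ℝ → ℝ}

theorem apply_eq (hX : MeanSP μ h Y l u X k) {t : ℝ} (ht : 0 ≤ t) (ω : Ω) :
    X t ω = Y t ω + k t :=
  hX.2.2.2.1 t ht ω

theorem lower_lt_mean_and_mean_lt_upper (hX : MeanSP μ h Y l u X k)
    (hX' : MeanSP μ h Y l u X' k') {t : ℝ} (ht : 0 ≤ t)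
    (hmean : StrictMono fun c ↦ ∫ ω, h t (Y t ω + c) ∂μ) (hlt : k' t < k t) :
    l t < ∫ ω, h t (X t ω) ∂μ ∧ ∫ ω, h t (X' t ω) ∂μ < u t := by
  have hmean_lt : ∫ ω, h t (X' t ω) ∂μ < ∫ ω, h t (X t ω) ∂μ := by
    simpa only [hX.apply_eq ht, hX'.apply_eq ht] using hmean hlt
  obtain ⟨-, -, -, -, hmem, -⟩ := hX
  obtain ⟨-, -, -, -, hmem', -⟩ := hX'
  exact ⟨(hmem' t ht).1.trans_lt hmean_lt, hmean_lt.trans_le (hmem t ht).2⟩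

theorem le_of_strictMono_mean (hX : MeanSP μ h Y l u X k) (hX' : MeanSP μ h Y l u X' k')
    (hmean : ∀ t, 0 ≤ t → StrictMono fun c ↦ ∫ ω, h t (Y t ω + c) ∂μ) {q : ℝ} (hq : 0 ≤ q) :
    k q ≤ k' q := by
  have hoff {t : ℝ} (ht : 0 ≤ t) (hlt : 0 < k t - k' t) :=
    hX.lower_lt_mean_and_mean_lt_upper hX' ht (hmean t ht) (sub_pos.1 hlt)
  obtain ⟨-, hk, hk0, -, -, hmin, hjump⟩ := hX
  obtain ⟨-, hk', hk0', -, -, hmin', hjump'⟩ := hX'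
  suffices k q - k' q ≤ 0 from sub_nonpos.1 this
  refine apply_le_of_forall_excursion_le (d := fun t ↦ k t - k' t) ?_ ?_ ?_ hq
  · simp only [hk0, hk0', sub_self, le_refl]
  · intro t ht htq hpos
    have hk_dec : k q - k t ≤ 0 := (hmin t q ht htq).2 fun s hts hsq ↦
      (hoff (ht.trans hts.le) (hpos s ⟨hts, hsq⟩)).1
    have hk'_inc : 0 ≤ k' q - k' t := (hmin' t q ht htq).1 fun s hts hsq ↦
      (hoff (ht.trans hts.le) (hpos s ⟨hts, hsq⟩)).2
    linarith
  · intro t ht hpos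
    have hk_jump : k t - leftLim k t ≤ 0 := (hjump t ht).2 (hoff ht.le hpos).1
    have hk'_jump : 0 ≤ k' t - leftLim k' t := (hjump' t ht).1 (hoff ht.le hpos).2
    have hlim_pos : 0 < leftLim k t - leftLim k' t := by linarith
    exact ((hk.tendsto_leftLim ht).sub (hk'.tendsto_leftLim ht)).eventually_const_lt hlim_pos

end MeanSP

theorem stmt_5_general {Ω : Type*} [MeasurableSpace Ω] {μ : Measure Ω} [NeZero μ]
    {h : ℝ → ℝ → ℝ} (hmono : ∀ t, 0 ≤ t → StrictMono (h t)) {Y : ℝ → Ω → ℝ}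
    (hint : ∀ t, 0 ≤ t → ∀ c, Integrable (fun ω ↦ h t (Y t ω + c)) μ) {l u : ℝ → ℝ}
    {X X' : ℝ → Ω → ℝ} {k k' : ℝ → ℝ} (hX : MeanSP μ h Y l u X k)
    (hX' : MeanSP μ h Y l u X' k') {t : ℝ} (ht : 0 ≤ t) :
    k t = k' t ∧ ∀ ω, X t ω = X' t ω := by
  have hmean (s : ℝ) (hs : 0 ≤ s) : StrictMono fun c ↦ ∫ ω, h s (Y s ω + c) ∂μ :=
    strictMono_integral (hint s hs) fun _ ↦ (hmono s hs).comp add_right_strictMono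
  have hk : k t = k' t :=
    (hX.le_of_strictMono_mean hX' hmean ht).antisymm (hX'.le_of_strictMono_mean hX hmean ht)
  exact ⟨hk, fun ω ↦ by rw [hX.apply_eq ht, hX'.apply_eq ht, hk]⟩

/-- uniqueness of the solution of the Skorokhod problem with mean minimality
condition and two constraints. -/
theorem stmt_5 {Ω : Type*} [MeasurableSpace Ω] (μ : Measure Ω) [IsProbabilityMeasure μ]
    (h : ℝ → ℝ → ℝ) (Mh Lh ch Ch : ℝ) (hH : CondH h Mh Lh ch Ch)
    (Y : ℝ → Ω → ℝ) (hY : NiceProcess μ Y)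
    (l u : ℝ → ℝ) (hl : CadlagOn l) (hu : CadlagOn u)
    (hlu : ∀ t : ℝ, 0 ≤ t → l t ≤ u t)
    (h0 : (∫ ω, h 0 (Y 0 ω) ∂μ) ∈ Set.Icc (l 0) (u 0))
    (X X' : ℝ → Ω → ℝ) (k k' : ℝ → ℝ)
    (hsol : MeanSP μ h Y l u X k) (hsol' : MeanSP μ h Y l u X' k') :
    ∀ t : ℝ, 0 ≤ t → k t = k' t ∧ ∀ ω, X t ω = X' t ω := fun _ ht ↦
  stmt_5_general hH.strict_mono
    (fun s hs c ↦ hH.integrable_comp_s5 hs ((hY.integrable s hs).add (integrable_const c)))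
    hsol hsol' ht
end
end
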